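/- arXiv:1309.7634 — 3 statements merged into one kernel-verified Lean document; each statement's English description precedes it below -/
import Mathlib

section
/- Let m ≥ 2, let F be an averaging operator, and let f : 𝕋_m → ℝ be bounded. Then there exists a unique function u : 𝕋_m × [0,∞) → ℝ such that: for every T > 0, u is bounded on 𝕋_m × [0,T]; for each x ∈ 𝕋_m the map t ↦ u(x,t) is continuous; and u(x,t) = K_f u(x,t) for all (x,t) ∈ 𝕋_m × [0,∞). -/
open MeasureTheory Real

/-- `F : ℝ^m → ℝ` is an averaging operator: continuous, `F(0,…,0)=0`, `F(1,…,1)=1`,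
positively homogeneous, translation equivariant, strictly below the max when the
coordinates are not all equal, and nondecreasing in each variable. -/
def IsAveraging (m : ℕ) (F : (Fin m → ℝ) → ℝ) : Prop :=
  Continuous F ∧
  F (fun _ => 0) = 0 ∧
  F (fun _ => 1) = 1 ∧
  (∀ (t : ℝ) (x : Fin m → ℝ), F (fun j => t * x j) = t * F x) ∧
  (∀ (t : ℝ) (x : Fin m → ℝ), F (fun j => t + x j) = t + F x) ∧
  (∀ x : Fin m → ℝ, (∃ i j, x i ≠ x j) → F x < ⨆ j, x j) ∧
  (∀ x y : Fin m → ℝ, (∀ j, x j ≤ y j) → F x ≤ F y)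

/-- The operator `K_f u(x,t) = ∫₀ᵗ e^{z−t} F(u((x,0),z),…,u((x,m−1),z)) dz + e^{−t} f(x)`,
where vertices of the directed tree `𝕋_m` are modeled as lists over `Fin m`
and `(x,i)` is the successor `x ++ [i]`. -/
noncomputable def Kop (m : ℕ) (F : (Fin m → ℝ) → ℝ) (f : List (Fin m) → ℝ)
    (u : List (Fin m) → ℝ → ℝ) (x : List (Fin m)) (t : ℝ) : ℝ :=
  (∫ z in (0:ℝ)..t, Real.exp (z - t) * F (fun i => u (x ++ [i]) z)) +
    Real.exp (-t) * f x

/-!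
With the weight `exp (K * t)`, where `K` is a Lipschitz constant of `F` for the sup norm, the kernel
`exp (z - t)` integrates to at most `exp (K * t) / (K + 1)`, so the operator contracts the weighted
sup norm by `K / (K + 1)`. Existence is Banach's fixed point theorem among the functions of growth
at most `exp (K * t)`. A solution is not assumed to grow so slowly, but the operator at time `t`
sees only `[0, t]`, where two solutions are at finite weighted distance; the contraction makes it
zero.
A monotone function that commutes with translations is `1`-Lipschitz, which covers averaging
operators.
-/

open Set
open scoped NNReal BoundedContinuousFunction

theorem lipschitzWith_one_of_monotone_of_translate {ι : Type*} [Fintype ι]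
    {F : (ι → ℝ) → ℝ} (hmono : Monotone F)
    (htranslate : ∀ (t : ℝ) (x : ι → ℝ), F (fun j => t + x j) = t + F x) : LipschitzWith 1 F := by
  refine LipschitzWith.of_le_add fun x y => ?_
  have hle : x ≤ fun j => dist x y + y j := fun j =>
    sub_le_iff_le_add.mp ((le_abs_self _).trans (dist_le_pi_dist x y j))
  calc F x ≤ F (fun j => dist x y + y j) := hmono hle
    _ = F y + dist x y := by rw [htranslate, add_comm]

theorem IsAveraging.lipschitzWith_one {m : ℕ} {F : (Fin m → ℝ) → ℝ} (hF : IsAveraging m F) :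
    LipschitzWith 1 F := by
  obtain ⟨-, -, -, -, htranslate, -, hmono⟩ := hF
  exact lipschitzWith_one_of_monotone_of_translate (fun x y => hmono x y) htranslate

theorem div_add_one_lt_one {𝕜 : Type*} [Semifield 𝕜] [LinearOrder 𝕜] [IsStrictOrderedRing 𝕜]
    {a : 𝕜} (ha : 0 ≤ a) : a / (a + 1) < 1 :=
  (div_lt_one (by positivity)).2 (lt_add_one a)

theorem integral_exp_sub_mul_exp_mul_le {a t : ℝ} (ha : -1 < a) :
    ∫ z in (0 : ℝ)..t, exp (z - t) * exp (a * z) ≤ exp (a * t) / (a + 1) := by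
  have ha_pos : 0 < a + 1 := by linarith
  have hderiv (z : ℝ) : HasDerivAt (fun z => exp (z - t) * exp (a * z) / (a + 1))
      (exp (z - t) * exp (a * z)) z := by
    have h₁ : HasDerivAt (fun z => exp (z - t)) (exp (z - t)) z := by
      simpa using ((hasDerivAt_id z).sub_const t).exp
    have h₂ : HasDerivAt (fun z => exp (a * z)) (exp (a * z) * a) z := by
      simpa using ((hasDerivAt_id z).const_mul a).exp
    exact ((h₁.mul h₂).div_const (a + 1)).congr_deriv (by field_simp; ring)
  rw [intervalIntegral.integral_eq_sub_of_hasDerivAt (fun z _ => hderiv z)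
    (Continuous.intervalIntegrable (by fun_prop) _ _), sub_self, exp_zero, one_mul]
  exact sub_le_self _ (by positivity)

section Duhamel

variable {V ι E : Type*} [NormedAddCommGroup E] [NormedSpace ℝ E]

theorem norm_integral_exp_sub_smul_le {g : ℝ → E} {a C t : ℝ} (ha : -1 < a) (hC : 0 ≤ C)
    (ht : 0 ≤ t) (hg : ∀ z ∈ Ioc 0 t, ‖g z‖ ≤ C * exp (a * z)) :
    ‖∫ z in (0 : ℝ)..t, exp (z - t) • g z‖ ≤ C * (exp (a * t) / (a + 1)) := by
  have hpoint (z : ℝ) (hz : z ∈ Ioc 0 t) :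
      ‖exp (z - t) • g z‖ ≤ C * (exp (z - t) * exp (a * z)) := by
    rw [norm_smul, norm_of_nonneg (exp_pos _).le, mul_left_comm]
    exact mul_le_mul_of_nonneg_left (hg z hz) (exp_pos _).le
  calc ‖∫ z in (0 : ℝ)..t, exp (z - t) • g z‖
      ≤ ∫ z in (0 : ℝ)..t, C * (exp (z - t) * exp (a * z)) :=
        intervalIntegral.norm_integral_le_of_norm_le ht (.of_forall hpoint)
          (Continuous.intervalIntegrable (by fun_prop) _ _)
    _ ≤ C * (exp (a * t) / (a + 1)) := by
        rw [intervalIntegral.integral_const_mul]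
        exact mul_le_mul_of_nonneg_left (integral_exp_sub_mul_exp_mul_le ha) hC

/-- The operator `Kop` on an arbitrary vertex set `V`, where `s x i` is the `i`-th successor of `x`,
and for functions with values in a normed space. -/
noncomputable def duhamel (s : V → ι → V) (F : (ι → E) → E) (f : V → E) (u : V → ℝ → E)
    (x : V) (t : ℝ) : E :=
  (∫ z in (0 : ℝ)..t, exp (z - t) • F (fun i => u (s x i) z)) + exp (-t) • f x

/-- The class in which existence and uniqueness hold: fixed points of `duhamel` on `V × [0,∞)` that
are continuous in time and bounded on bounded time intervals. Negative times are unconstrained. -/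
def IsDuhamelSolution (s : V → ι → V) (F : (ι → E) → E) (f : V → E) (u : V → ℝ → E) : Prop :=
  (∀ T > (0 : ℝ), ∃ M : ℝ, ∀ x, ∀ t ∈ Icc (0 : ℝ) T, ‖u x t‖ ≤ M) ∧
    (∀ x, ContinuousOn (u x) (Ici (0 : ℝ))) ∧
    ∀ x, ∀ t ≥ (0 : ℝ), u x t = duhamel s F f u x t

variable {s : V → ι → V} {F : (ι → E) → E} {f : V → E}

theorem continuous_duhamel (hF : Continuous F) {u : V → ℝ → E} (hu : ∀ x, Continuous (u x))
    (x : V) : Continuous (duhamel s F f u x) := by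
  unfold duhamel
  refine .add ?_ (by fun_prop)
  refine intervalIntegral.continuous_parametric_intervalIntegral_of_continuous
    (f := fun t z => exp (z - t) • F (fun i => u (s x i) z)) ?_ continuous_id
  simp only [Function.uncurry_def]
  fun_prop

theorem intervalIntegrable_exp_sub_smul (hF : Continuous F) {u : V → ℝ → E}
    (hu : ∀ x, ContinuousOn (u x) (Ici 0)) (x : V) {t : ℝ} (ht : 0 ≤ t) :
    IntervalIntegrable (fun z => exp (z - t) • F (fun i => u (s x i) z)) volume 0 t := by
  have hcont : ContinuousOn (fun z => exp (z - t) • F (fun i => u (s x i) z)) (Ici 0) :=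
    ContinuousOn.smul (by fun_prop) (hF.comp_continuousOn (continuousOn_pi.2 fun i => hu _))
  refine (hcont.mono ?_).intervalIntegrable
  rw [uIcc_of_le ht]
  exact Icc_subset_Ici_self

theorem norm_duhamel_zero_le (x : V) {t : ℝ} (ht : 0 ≤ t) :
    ‖duhamel s F f 0 x t‖ ≤ ‖F 0‖ + ‖f x‖ := by
  have hintegral : ‖∫ z in (0 : ℝ)..t, exp (z - t) • F 0‖ ≤ ‖F 0‖ := by
    simpa using norm_integral_exp_sub_smul_le (g := fun _ => F 0) neg_one_lt_zero
      (norm_nonneg (F 0)) ht (by simp)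
  have hinitial : ‖exp (-t) • f x‖ ≤ ‖f x‖ := by
    rw [norm_smul, norm_of_nonneg (exp_pos _).le]
    exact mul_le_of_le_one_left (norm_nonneg _) (exp_le_one_iff.2 (by linarith))
  exact (norm_add_le _ _).trans (add_le_add hintegral hinitial)

variable [Fintype ι] {K : ℝ≥0}

theorem norm_duhamel_sub_le (hF : LipschitzWith K F) {u v : V → ℝ → E}
    (hu : ∀ x, ContinuousOn (u x) (Ici 0)) (hv : ∀ x, ContinuousOn (v x) (Ici 0)) {C t : ℝ}
    (huv : ∀ x, ∀ z ∈ Icc 0 t, ‖u x z - v x z‖ ≤ C * exp (K * z)) (x : V) (ht : 0 ≤ t) :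
    ‖duhamel s F f u x t - duhamel s F f v x t‖ ≤ K / (K + 1) * C * exp (K * t) := by
  have hC : 0 ≤ C := by simpa using (norm_nonneg _).trans (huv x 0 ⟨le_rfl, ht⟩)
  have hF_sub (z : ℝ) (hz : z ∈ Ioc 0 t) :
      ‖F (fun i => u (s x i) z) - F (fun i => v (s x i) z)‖ ≤ K * C * exp (K * z) := by
    rw [mul_assoc]
    exact (hF.norm_sub_le _ _).trans <| mul_le_mul_of_nonneg_left
      ((pi_norm_le_iff_of_nonneg (by positivity)).2 fun i => huv _ z (Ioc_subset_Icc_self hz))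
      K.coe_nonneg
  calc ‖duhamel s F f u x t - duhamel s F f v x t‖
      = ‖∫ z in (0 : ℝ)..t,
          exp (z - t) • (F (fun i => u (s x i) z) - F (fun i => v (s x i) z))‖ := by
        simp only [smul_sub]
        rw [intervalIntegral.integral_sub (intervalIntegrable_exp_sub_smul hF.continuous hu x ht)
          (intervalIntegrable_exp_sub_smul hF.continuous hv x ht), duhamel, duhamel,
          add_sub_add_right_eq_sub]
    _ ≤ K * C * (exp (K * t) / (K + 1)) :=
        norm_integral_exp_sub_smul_le (neg_one_lt_zero.trans_le K.coe_nonneg) (by positivity) ht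
          hF_sub
    _ = K / (K + 1) * C * exp (K * t) := by ring

theorem IsDuhamelSolution.eq_of_nonneg (hF : LipschitzWith K F) {u v : V → ℝ → E}
    (hu : IsDuhamelSolution s F f u) (hv : IsDuhamelSolution s F f v) (x : V) {t : ℝ} (ht : 0 ≤ t) :
    u x t = v x t := by
  obtain ⟨hu_bdd, hu_cont, hu_fix⟩ := hu
  obtain ⟨hv_bdd, hv_cont, hv_fix⟩ := hv
  obtain ⟨A, hA⟩ := hu_bdd (t + 1) (by linarith)
  obtain ⟨B, hB⟩ := hv_bdd (t + 1) (by linarith)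
  let d (p : V × Icc 0 t) : ℝ := ‖u p.1 p.2 - v p.1 p.2‖ / exp (K * p.2)
  have hd_bdd : BddAbove (range d) := by
    refine ⟨A + B, forall_mem_range.2 fun ⟨y, z, hz⟩ => ?_⟩
    have hz' : z ∈ Icc 0 (t + 1) := ⟨hz.1, hz.2.trans (by linarith)⟩
    exact (div_le_self (norm_nonneg _) (one_le_exp (mul_nonneg K.coe_nonneg hz.1))).trans
      ((norm_sub_le _ _).trans (add_le_add (hA y z hz') (hB y z hz')))
  have hle_sup (y : V) (z : ℝ) (hz : z ∈ Icc 0 t) :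
      ‖u y z - v y z‖ ≤ (⨆ p, d p) * exp (K * z) :=
    (div_le_iff₀ (exp_pos _)).1 (le_ciSup hd_bdd ⟨y, z, hz⟩)
  have hcontract (p : V × Icc 0 t) : d p ≤ K / (K + 1) * ⨆ p, d p := by
    obtain ⟨y, z, hz⟩ := p
    refine (div_le_iff₀ (exp_pos _)).2 ?_
    dsimp only
    rw [hu_fix y z hz.1, hv_fix y z hz.1]
    exact norm_duhamel_sub_le hF hu_cont hv_cont
      (fun y' z' hz' => hle_sup y' z' ⟨hz'.1, hz'.2.trans hz.2⟩) y hz.1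
  have : Nonempty (V × Icc 0 t) := ⟨x, t, ht, le_rfl⟩
  have hsup : ⨆ p, d p ≤ 0 := by
    have hr : (K / (K + 1) : ℝ) < 1 := div_add_one_lt_one K.coe_nonneg
    exact le_of_not_gt fun hpos => (mul_lt_of_lt_one_left hpos hr).not_ge (ciSup_le hcontract)
  have hnorm : ‖u x t - v x t‖ ≤ 0 :=
    (hle_sup x t ⟨ht, le_rfl⟩).trans (mul_nonpos_of_nonpos_of_nonneg hsup (exp_pos _).le)
  exact sub_eq_zero.1 (norm_le_zero_iff.1 hnorm)

section Existence

variable [TopologicalSpace V]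

/-- The function with profile `w`. It lets the Banach space `V × ℝ →ᵇ E` stand for the functions
that grow at most like `exp (K * t)`, with their weighted sup norm. -/
noncomputable def ofProfile (K : ℝ≥0) (w : V × ℝ →ᵇ E) (x : V) (t : ℝ) : E :=
  exp (K * t) • w (x, t)

theorem continuous_ofProfile (w : V × ℝ →ᵇ E) (x : V) : Continuous (ofProfile K w x) := by
  unfold ofProfile
  fun_prop

theorem norm_ofProfile_sub_le (w w' : V × ℝ →ᵇ E) (x : V) (t : ℝ) :
    ‖ofProfile K w x t - ofProfile K w' x t‖ ≤ dist w w' * exp (K * t) := by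
  rw [ofProfile, ofProfile, ← smul_sub, norm_smul, norm_of_nonneg (exp_pos _).le, mul_comm,
    ← dist_eq_norm]
  gcongr
  exact BoundedContinuousFunction.dist_coe_le_dist _

theorem norm_duhamel_ofProfile_sub_le (hF : LipschitzWith K F) (w w' : V × ℝ →ᵇ E) (x : V) {t : ℝ}
    (ht : 0 ≤ t) :
    ‖duhamel s F f (ofProfile K w) x t - duhamel s F f (ofProfile K w') x t‖ ≤
      K / (K + 1) * dist w w' * exp (K * t) :=
  norm_duhamel_sub_le hF (fun y => (continuous_ofProfile w y).continuousOn)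
    (fun y => (continuous_ofProfile w' y).continuousOn)
    (fun y z _ => norm_ofProfile_sub_le w w' y z) x ht

theorem norm_duhamel_ofProfile_le (hF : LipschitzWith K F) {M : ℝ} (hf : ∀ x, ‖f x‖ ≤ M)
    (w : V × ℝ →ᵇ E) (x : V) {t : ℝ} (ht : 0 ≤ t) :
    ‖duhamel s F f (ofProfile K w) x t‖ ≤ (K / (K + 1) * ‖w‖ + ‖F 0‖ + M) * exp (K * t) := by
  have hM : 0 ≤ M := (norm_nonneg _).trans (hf x)
  have hzero : ofProfile K (0 : V × ℝ →ᵇ E) = 0 := by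
    ext
    simp [ofProfile]
  have hdiff := norm_duhamel_ofProfile_sub_le (s := s) (f := f) hF w 0 x ht
  rw [hzero, dist_zero_right] at hdiff
  calc ‖duhamel s F f (ofProfile K w) x t‖
      ≤ ‖duhamel s F f (ofProfile K w) x t - duhamel s F f 0 x t‖ + ‖duhamel s F f 0 x t‖ :=
        norm_le_norm_sub_add _ _
    _ ≤ K / (K + 1) * ‖w‖ * exp (K * t) + (‖F 0‖ + M) * 1 := by
        rw [mul_one]
        gcongr
        exact (norm_duhamel_zero_le x ht).trans (add_le_add_right (hf x) _)
    _ ≤ K / (K + 1) * ‖w‖ * exp (K * t) + (‖F 0‖ + M) * exp (K * t) := by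
        gcongr
        exact one_le_exp (by positivity)
    _ = _ := by ring

/-- `duhamel` transported to profiles. Time is clamped to `[0,∞)` since `duhamel` need not be
bounded by the weight at negative times. -/
noncomputable def profileMap [DiscreteTopology V] (s : V → ι → V) (hF : LipschitzWith K F)
    (hf : ∃ M : ℝ, ∀ x, ‖f x‖ ≤ M) (w : V × ℝ →ᵇ E) : V × ℝ →ᵇ E :=
  BoundedContinuousFunction.ofNormedAddCommGroup
    (fun p => exp (-(K * max 0 p.2)) • duhamel s F f (ofProfile K w) p.1 (max 0 p.2))
    (continuous_prod_of_discrete_left.2 fun x => by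
      have hcont := continuous_duhamel (s := s) (f := f) hF.continuous
        (continuous_ofProfile (K := K) w) x
      exact .smul (by fun_prop) (hcont.comp (by fun_prop)))
    (K / (K + 1) * ‖w‖ + ‖F 0‖ + hf.choose)
    (fun p => by
      rw [norm_smul, norm_of_nonneg (exp_pos _).le, exp_neg, inv_mul_le_iff₀' (exp_pos _)]
      exact norm_duhamel_ofProfile_le hF hf.choose_spec w p.1 (le_max_left _ _))

theorem contractingWith_profileMap [DiscreteTopology V] (hF : LipschitzWith K F)
    (hf : ∃ M : ℝ, ∀ x, ‖f x‖ ≤ M) :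
    ContractingWith (K / (K + 1)) (profileMap s hF hf) := by
  refine ⟨div_add_one_lt_one K.2, LipschitzWith.of_dist_le_mul fun w w' => ?_⟩
  refine (BoundedContinuousFunction.dist_le (by positivity)).2 fun p => ?_
  simp only [profileMap, BoundedContinuousFunction.coe_ofNormedAddCommGroup]
  rw [dist_eq_norm, ← smul_sub, norm_smul, norm_of_nonneg (exp_pos _).le, exp_neg,
    inv_mul_le_iff₀' (exp_pos _)]
  exact_mod_cast norm_duhamel_ofProfile_sub_le hF w w' p.1 (le_max_left _ _)

theorem isDuhamelSolution_ofProfile_of_isFixedPt [DiscreteTopology V] (hF : LipschitzWith K F)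
    (hf : ∃ M : ℝ, ∀ x, ‖f x‖ ≤ M) {w : V × ℝ →ᵇ E}
    (hw : Function.IsFixedPt (profileMap s hF hf) w) :
    IsDuhamelSolution s F f (ofProfile K w) := by
  refine ⟨fun T _ => ⟨exp (K * T) * ‖w‖, fun x t ht => ?_⟩,
    fun x => (continuous_ofProfile w x).continuousOn, fun x t ht => ?_⟩
  · rw [ofProfile, norm_smul, norm_of_nonneg (exp_pos _).le]
    gcongr
    · exact ht.2
    · exact w.norm_coe_le_norm _
  · have hwx : w (x, t) = (exp (K * t))⁻¹ • duhamel s F f (ofProfile K w) x t := by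
      conv_lhs => rw [← hw]
      simp [profileMap, max_eq_right ht, exp_neg]
    rw [ofProfile, hwx, smul_inv_smul₀ (exp_ne_zero _)]

end Existence

theorem exists_isDuhamelSolution [CompleteSpace E] (s : V → ι → V) (hF : LipschitzWith K F)
    (hf : ∃ M : ℝ, ∀ x, ‖f x‖ ≤ M) : ∃ u, IsDuhamelSolution s F f u := by
  let : TopologicalSpace V := ⊥
  have : DiscreteTopology V := ⟨rfl⟩
  exact ⟨_, isDuhamelSolution_ofProfile_of_isFixedPt hF hf
    (contractingWith_profileMap hF hf).fixedPoint_isFixedPt⟩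

theorem statement0_general [CompleteSpace E] (s : V → ι → V) (hF : LipschitzWith K F)
    (hf : ∃ M : ℝ, ∀ x, ‖f x‖ ≤ M) :
    ∃ u, IsDuhamelSolution s F f u ∧
      ∀ v, IsDuhamelSolution s F f v → ∀ x, ∀ t ≥ (0 : ℝ), v x t = u x t := by
  obtain ⟨u, hu⟩ := exists_isDuhamelSolution s hF hf
  exact ⟨u, hu, fun _ hv x _ ht => hv.eq_of_nonneg hF hu x ht⟩

end Duhamel

/-- Existence and uniqueness of a solution of `u = K_f u`, locally bounded
in time and continuous in `t`, for a bounded initial datum `f`. Uniqueness is stated as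
agreement on `𝕋_m × [0,∞)`. -/
theorem statement0 (m : ℕ) (hm : 2 ≤ m) (F : (Fin m → ℝ) → ℝ) (hF : IsAveraging m F)
    (f : List (Fin m) → ℝ) (hf : ∃ M : ℝ, ∀ x, |f x| ≤ M) :
    ∃ u : List (Fin m) → ℝ → ℝ,
      ((∀ T > (0:ℝ), ∃ M : ℝ, ∀ x, ∀ t ∈ Set.Icc (0:ℝ) T, |u x t| ≤ M) ∧
        (∀ x, ContinuousOn (u x) (Set.Ici (0:ℝ))) ∧
        (∀ x, ∀ t ≥ (0:ℝ), u x t = Kop m F f u x t)) ∧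
      (∀ v : List (Fin m) → ℝ → ℝ,
        ((∀ T > (0:ℝ), ∃ M : ℝ, ∀ x, ∀ t ∈ Set.Icc (0:ℝ) T, |v x t| ≤ M) ∧
          (∀ x, ContinuousOn (v x) (Set.Ici (0:ℝ))) ∧
          (∀ x, ∀ t ≥ (0:ℝ), v x t = Kop m F f v x t)) →
        ∀ x, ∀ t ≥ (0:ℝ), v x t = u x t) := by
  exact statement0_general (fun x i => x ++ [i]) hF.lipschitzWith_one hf
end

section
/- Let m ≥ 2, let F be an averaging operator, let λ ∈ (0,1), k > 0, and let f : 𝕋_m → ℝ satisfy |f(x)| ≤ k(1−λ)^{l(x)} for all x ∈ 𝕋_m. If u : 𝕋_m × [0,∞) → ℝ is bounded on 𝕋_m × [0,T] for every T > 0, continuous in t for each x, and satisfies u = K_f u, then sup_{x ∈ 𝕋_m} |u(x,t)| ≤ k e^{−λ t} for all t ≥ 0. -/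
open MeasureTheory Real

/-!
The level function `k ρ ^ l(x) e^{(ρ - 1) t}` with `ρ = 1 - λ` solves `u = K_f u` with initial datum
`k ρ ^ l(x)`. As `|F v| ≤ max |vⱼ|` and `∫₀ᵗ e^{z - t} dz = 1 - e^{-t}`, the map `K_f` shrinks any
excess of `|u|` over this function on `[0, T]` by the factor `1 - e^{-T} < 1`. A bounded fixed point
therefore has no excess at all.
-/

/-- The comparison function `k ρⁿ e^{(ρ - 1) t}`, where `n` is the level of a vertex. With
`ρ = 1 - λ` the exponential is the factor `e^{-λ t}` of the decay estimate. -/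
noncomputable def levelEnvelope (k ρ : ℝ) (n : ℕ) (t : ℝ) : ℝ :=
  k * ρ ^ n * Real.exp ((ρ - 1) * t)

theorem levelEnvelope_nonneg {k ρ : ℝ} (hk : 0 ≤ k) (hρ : 0 ≤ ρ) (n : ℕ) (t : ℝ) :
    0 ≤ levelEnvelope k ρ n t := by
  unfold levelEnvelope
  positivity

theorem continuous_levelEnvelope (k ρ : ℝ) (n : ℕ) : Continuous (levelEnvelope k ρ n) := by
  unfold levelEnvelope
  fun_prop

theorem integral_exp_sub (t : ℝ) : ∫ z in (0 : ℝ)..t, Real.exp (z - t) = 1 - Real.exp (-t) := by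
  simp [intervalIntegral.integral_comp_sub_right Real.exp t]

theorem integral_exp_sub_mul_levelEnvelope_succ (k ρ : ℝ) (n : ℕ) (t : ℝ) :
    ∫ z in (0 : ℝ)..t, Real.exp (z - t) * levelEnvelope k ρ (n + 1) z =
      levelEnvelope k ρ n t - Real.exp (-t) * (k * ρ ^ n) := by
  have hderiv (z : ℝ) : HasDerivAt (fun z => k * ρ ^ n * Real.exp (ρ * z - t))
      (Real.exp (z - t) * levelEnvelope k ρ (n + 1) z) z := by
    have hlin : HasDerivAt (fun z => ρ * z - t) ρ z := by
      simpa using ((hasDerivAt_id z).const_mul ρ).sub_const t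
    refine (hlin.exp.const_mul (k * ρ ^ n)).congr_deriv ?_
    have hexp : Real.exp (ρ * z - t) = Real.exp (z - t) * Real.exp ((ρ - 1) * z) := by
      rw [← Real.exp_add]
      ring_nf
    rw [levelEnvelope, hexp]
    ring
  have hcont : Continuous fun z => Real.exp (z - t) * levelEnvelope k ρ (n + 1) z :=
    (by fun_prop : Continuous fun z : ℝ => Real.exp (z - t)).mul (continuous_levelEnvelope k ρ _)
  rw [intervalIntegral.integral_eq_sub_of_hasDerivAt (fun z _ => hderiv z)
    (hcont.intervalIntegrable _ _), levelEnvelope]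
  ring_nf

theorem integral_exp_sub_mul_levelEnvelope_succ_add (k ρ C : ℝ) (n : ℕ) (t : ℝ) :
    ∫ z in (0 : ℝ)..t, Real.exp (z - t) * (levelEnvelope k ρ (n + 1) z + C) =
      levelEnvelope k ρ n t - Real.exp (-t) * (k * ρ ^ n) + (1 - Real.exp (-t)) * C := by
  have hexp : Continuous fun z : ℝ => Real.exp (z - t) := by fun_prop
  have hexp_env : IntervalIntegrable
      (fun z => Real.exp (z - t) * levelEnvelope k ρ (n + 1) z) volume 0 t :=
    (hexp.mul (continuous_levelEnvelope k ρ _)).intervalIntegrable _ _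
  have hexp_const : IntervalIntegrable (fun z => Real.exp (z - t) * C) volume 0 t :=
    (hexp.mul continuous_const).intervalIntegrable _ _
  simp only [mul_add]
  rw [intervalIntegral.integral_add hexp_env hexp_const,
    integral_exp_sub_mul_levelEnvelope_succ, intervalIntegral.integral_mul_const,
    integral_exp_sub]

namespace IsAveraging

variable {m : ℕ} {F : (Fin m → ℝ) → ℝ}

theorem apply_const (hF : IsAveraging m F) (c : ℝ) : F (fun _ => c) = c := by
  obtain ⟨-, -, hone, hhom, -⟩ := hF
  simpa [hone] using hhom c fun _ => 1

theorem norm_apply_le (hF : IsAveraging m F) (v : Fin m → ℝ) : ‖F v‖ ≤ ‖v‖ := by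
  have hmono : ∀ x y, (∀ j, x j ≤ y j) → F x ≤ F y := hF.2.2.2.2.2.2
  have hv (j : Fin m) : -‖v‖ ≤ v j ∧ v j ≤ ‖v‖ := abs_le.1 (norm_le_pi_norm v j)
  refine abs_le.2 ⟨?_, ?_⟩
  · simpa only [hF.apply_const] using hmono (fun _ => -‖v‖) v fun j => (hv j).1
  · simpa only [hF.apply_const] using hmono v (fun _ => ‖v‖) fun j => (hv j).2

end IsAveraging

section Kop

variable {m : ℕ} {F : (Fin m → ℝ) → ℝ} {f : List (Fin m) → ℝ} {u : List (Fin m) → ℝ → ℝ}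

theorem intervalIntegrable_apply_children (hF : Continuous F)
    (hu : ∀ x, ContinuousOn (u x) (Set.Ici 0)) (x : List (Fin m)) {t : ℝ} (ht : 0 ≤ t) :
    IntervalIntegrable (fun z => F fun i => u (x ++ [i]) z) volume 0 t := by
  refine ContinuousOn.intervalIntegrable_of_Icc ht (hF.comp_continuousOn ?_)
  exact continuousOn_pi.2 fun i => (hu (x ++ [i])).mono Set.Icc_subset_Ici_self

theorem abs_Kop_le (hF : ∀ v, ‖F v‖ ≤ ‖v‖) {g : ℝ → ℝ} {x : List (Fin m)} {t : ℝ} (ht : 0 ≤ t)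
    (hint : IntervalIntegrable (fun z => F fun i => u (x ++ [i]) z) volume 0 t)
    (hg : Continuous g) (hug : ∀ z ∈ Set.Icc 0 t, ‖fun i => u (x ++ [i]) z‖ ≤ g z) :
    |Kop m F f u x t| ≤ (∫ z in (0 : ℝ)..t, Real.exp (z - t) * g z) + Real.exp (-t) * |f x| := by
  have hexp : Continuous fun z : ℝ => Real.exp (z - t) := by fun_prop
  have hintegral : |∫ z in (0 : ℝ)..t, Real.exp (z - t) * F fun i => u (x ++ [i]) z| ≤
      ∫ z in (0 : ℝ)..t, Real.exp (z - t) * g z := by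
    refine (intervalIntegral.abs_integral_le_integral_abs ht).trans ?_
    refine intervalIntegral.integral_mono_on ht (hint.continuousOn_mul hexp.continuousOn).abs
      ((hexp.mul hg).intervalIntegrable _ _) fun z hz => ?_
    rw [abs_mul, Real.abs_exp]
    gcongr
    exact (hF _).trans (hug z hz)
  refine (abs_add_le _ _).trans (add_le_add hintegral (le_of_eq ?_))
  rw [abs_mul, Real.abs_exp]

theorem abs_Kop_le_levelEnvelope_add (hF : ∀ v, ‖F v‖ ≤ ‖v‖) {k ρ C : ℝ} (hk : 0 ≤ k)
    (hρ : 0 ≤ ρ) (hC : 0 ≤ C) {x : List (Fin m)} (hf : |f x| ≤ k * ρ ^ x.length) {t : ℝ}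
    (ht : 0 ≤ t) (hint : IntervalIntegrable (fun z => F fun i => u (x ++ [i]) z) volume 0 t)
    (hu : ∀ i, ∀ z ∈ Set.Icc 0 t, |u (x ++ [i]) z| ≤ levelEnvelope k ρ (x.length + 1) z + C) :
    |Kop m F f u x t| ≤ levelEnvelope k ρ x.length t + (1 - Real.exp (-t)) * C := by
  have hchildren (z : ℝ) (hz : z ∈ Set.Icc 0 t) :
      ‖fun i => u (x ++ [i]) z‖ ≤ levelEnvelope k ρ (x.length + 1) z + C :=
    (pi_norm_le_iff_of_nonneg (add_nonneg (levelEnvelope_nonneg hk hρ _ z) hC)).2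
      fun i => hu i z hz
  calc |Kop m F f u x t|
      ≤ (∫ z in (0 : ℝ)..t, Real.exp (z - t) * (levelEnvelope k ρ (x.length + 1) z + C)) +
          Real.exp (-t) * |f x| := abs_Kop_le hF ht hint
            ((continuous_levelEnvelope k ρ _).add continuous_const) hchildren
    _ = levelEnvelope k ρ x.length t - Real.exp (-t) * (k * ρ ^ x.length) +
          (1 - Real.exp (-t)) * C + Real.exp (-t) * |f x| := by
      rw [integral_exp_sub_mul_levelEnvelope_succ_add]
    _ ≤ levelEnvelope k ρ x.length t + (1 - Real.exp (-t)) * C := by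
      linarith [mul_le_mul_of_nonneg_left hf (Real.exp_pos (-t)).le]

theorem abs_le_levelEnvelope_add_pow_mul (hF : ∀ v, ‖F v‖ ≤ ‖v‖) {k ρ M T : ℝ} (hk : 0 ≤ k)
    (hρ : 0 ≤ ρ) (hf : ∀ x, |f x| ≤ k * ρ ^ x.length)
    (hM : ∀ x, ∀ t ∈ Set.Icc 0 T, |u x t| ≤ M)
    (hint : ∀ x, ∀ t ∈ Set.Icc 0 T,
      IntervalIntegrable (fun z => F fun i => u (x ++ [i]) z) volume 0 t)
    (hK : ∀ x, ∀ t ∈ Set.Icc 0 T, u x t = Kop m F f u x t) (n : ℕ) (x : List (Fin m)) {t : ℝ}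
    (ht : t ∈ Set.Icc 0 T) :
    |u x t| ≤ levelEnvelope k ρ x.length t + (1 - Real.exp (-T)) ^ n * M := by
  have hM0 : 0 ≤ M := (abs_nonneg _).trans (hM x t ht)
  have hq : 0 ≤ 1 - Real.exp (-T) := by simpa using ht.1.trans ht.2
  induction n generalizing x t with
  | zero => simpa using add_le_add (levelEnvelope_nonneg hk hρ x.length t) (hM x t ht)
  | succ n ih =>
    have hchildren (i : Fin m) (z : ℝ) (hz : z ∈ Set.Icc 0 t) :
        |u (x ++ [i]) z| ≤
          levelEnvelope k ρ (x.length + 1) z + (1 - Real.exp (-T)) ^ n * M := by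
      simpa using ih (x ++ [i]) ⟨hz.1, hz.2.trans ht.2⟩
    rw [hK x t ht]
    refine (abs_Kop_le_levelEnvelope_add hF hk hρ (by positivity) (hf x) ht.1 (hint x t ht)
      hchildren).trans ?_
    rw [pow_succ', mul_assoc]
    gcongr
    exact ht.2

end Kop

theorem statement4_general {m : ℕ} {F : (Fin m → ℝ) → ℝ} (hF : ∀ v, ‖F v‖ ≤ ‖v‖) {lam k : ℝ}
    (hlam : lam ≤ 1) {f : List (Fin m) → ℝ} (hf : ∀ x, |f x| ≤ k * (1 - lam) ^ x.length)
    {u : List (Fin m) → ℝ → ℝ}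
    (hub : ∀ T > (0 : ℝ), ∃ M : ℝ, ∀ x, ∀ t ∈ Set.Icc (0 : ℝ) T, |u x t| ≤ M)
    (hint : ∀ x, ∀ t ≥ (0 : ℝ), IntervalIntegrable (fun z => F fun i => u (x ++ [i]) z) volume 0 t)
    (hK : ∀ x, ∀ t ≥ (0 : ℝ), u x t = Kop m F f u x t) (x : List (Fin m)) {t : ℝ} (ht : 0 ≤ t) :
    |u x t| ≤ k * (1 - lam) ^ x.length * Real.exp (-lam * t) := by
  obtain ⟨M, hM⟩ := hub (t + 1) (by positivity)
  have hk : 0 ≤ k := by simpa using (abs_nonneg _).trans (hf [])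
  have hq : Filter.Tendsto (fun n : ℕ => (1 - Real.exp (-(t + 1))) ^ n) Filter.atTop (nhds 0) :=
    tendsto_pow_atTop_nhds_zero_of_lt_one
      (sub_nonneg.2 (Real.exp_le_one_iff.2 (by linarith))) (sub_lt_self _ (Real.exp_pos _))
  have hlim := (hq.mul_const M).const_add (levelEnvelope k (1 - lam) x.length t)
  have hle := ge_of_tendsto' hlim fun n =>
    abs_le_levelEnvelope_add_pow_mul hF hk (sub_nonneg.2 hlam) hf hM
      (fun x t ht => hint x t ht.1) (fun x t ht => hK x t ht.1) n x ⟨ht, by linarith⟩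
  simpa [levelEnvelope] using hle

/-- if `|f(x)| ≤ k(1−λ)^{l(x)}` with `λ ∈ (0,1)`, `k > 0`, then the
solution of `u = K_f u` satisfies `sup_x |u(x,t)| ≤ k e^{−λt}` for all `t ≥ 0`. -/
theorem statement4 (m : ℕ) (hm : 2 ≤ m) (F : (Fin m → ℝ) → ℝ) (hF : IsAveraging m F)
    (lam k : ℝ) (hlam : 0 < lam) (hlam1 : lam < 1) (hk : 0 < k)
    (f : List (Fin m) → ℝ)
    (hf : ∀ x : List (Fin m), |f x| ≤ k * (1 - lam) ^ x.length)
    (u : List (Fin m) → ℝ → ℝ)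
    (hub : ∀ T > (0:ℝ), ∃ M : ℝ, ∀ x, ∀ t ∈ Set.Icc (0:ℝ) T, |u x t| ≤ M)
    (huc : ∀ x, ContinuousOn (u x) (Set.Ici (0:ℝ)))
    (hK : ∀ x, ∀ t ≥ (0:ℝ), u x t = Kop m F f u x t) :
    ∀ t ≥ (0:ℝ), (⨆ x : List (Fin m), |u x t|) ≤ k * Real.exp (-lam * t) := by
  intro t ht
  refine ciSup_le fun x => (statement4_general hF.norm_apply_le hlam1.le hf hub
    (fun x _ => intervalIntegrable_apply_children hF.1 huc x) hK x ht).trans ?_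
  gcongr
  exact mul_le_of_le_one_right hk.le (pow_le_one₀ (by linarith) (by linarith))
end

section
/- Let m ≥ 2, let F be an averaging operator, and let a₀ : [0,∞) → ℝ be infinitely differentiable. Define u : 𝕋_m × [0,∞) → ℝ by u(x,t) := Σ_{j=0}^{l(x)} binom(l(x), j) · a₀^{(j)}(t), where a₀^{(j)} denotes the j-th derivative. Then u(∅,t) = a₀(t) for all t, and for every x ∈ 𝕋_m and t ∈ (0,∞), the derivative ∂_t u(x,t) exists and equals F(u((x,0),t),…,u((x,m−1),t)) − u(x,t). -/
/-!
By the binomial theorem `u(x, ·) = (1 + d/dt)^{l(x)} a₀`. Hence `u` is constant on the children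
of `x`, and `F`, which satisfies `F(c, …, c) = c`, returns the common value
`(1 + d/dt)^{l(x)+1} a₀ = u(x, ·) + ∂ₜ u(x, ·)`.
-/

open MeasureTheory Real

section OneAddDerivPow

variable {𝕜 E : Type*} [NontriviallyNormedField 𝕜] [NormedAddCommGroup E] [NormedSpace 𝕜 E]

/-- The differential operator `(1 + d/dt)^n` applied to `a`. It is defined by its binomial
expansion, which has this meaning only where `a` is `n` times differentiable. -/
noncomputable def oneAddDerivPow (n : ℕ) (a : 𝕜 → E) (t : 𝕜) : E :=
  ∑ j ∈ Finset.range (n + 1), n.choose j • iteratedDeriv j a t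

theorem oneAddDerivPow_zero (a : 𝕜 → E) : oneAddDerivPow 0 a = a := by
  ext t
  simp [oneAddDerivPow]

theorem oneAddDerivPow_succ (n : ℕ) (a : 𝕜 → E) (t : 𝕜) :
    oneAddDerivPow (n + 1) a t = oneAddDerivPow n a t + oneAddDerivPow n (deriv a) t := by
  simpa only [oneAddDerivPow, iteratedDeriv_succ'] using
    Finset.sum_choose_succ_nsmul (fun j _ => iteratedDeriv j a t) n

theorem hasDerivAt_iteratedDeriv {n : ℕ} {a : 𝕜 → E} {t : 𝕜} (ha : ContDiffAt 𝕜 (n + 1) a t) :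
    HasDerivAt (iteratedDeriv n a) (iteratedDeriv (n + 1) a t) t := by
  have hdiff : DifferentiableAt 𝕜 (iteratedDeriv n a) t := by
    simpa only [iteratedDeriv_eq_equiv_comp, LinearIsometryEquiv.comp_differentiableAt_iff] using
      ha.differentiableAt_iteratedFDeriv (by exact_mod_cast n.lt_succ_self)
  simpa only [iteratedDeriv_succ] using hdiff.hasDerivAt

theorem hasDerivAt_oneAddDerivPow {n : ℕ} {a : 𝕜 → E} {t : 𝕜} (ha : ContDiffAt 𝕜 (n + 1) a t) :
    HasDerivAt (oneAddDerivPow n a) (oneAddDerivPow n (deriv a) t) t := by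
  simp only [oneAddDerivPow, ← iteratedDeriv_succ']
  refine HasDerivAt.fun_sum fun j hj => (hasDerivAt_iteratedDeriv (ha.of_le ?_)).fun_const_smul _
  exact_mod_cast Finset.mem_range.mp hj

theorem hasDerivAt_oneAddDerivPow_sub {n : ℕ} {a : 𝕜 → E} {t : 𝕜}
    (ha : ContDiffAt 𝕜 (n + 1) a t) :
    HasDerivAt (oneAddDerivPow n a) (oneAddDerivPow (n + 1) a t - oneAddDerivPow n a t) t := by
  simpa only [oneAddDerivPow_succ, add_sub_cancel_left] using hasDerivAt_oneAddDerivPow ha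

theorem statement5_general {ι : Type*} (F : (ι → E) → E) (hF : ∀ c, F (fun _ => c) = c)
    (a₀ : 𝕜 → E) (u : List ι → 𝕜 → E) (hu : ∀ x t, u x t = oneAddDerivPow x.length a₀ t) :
    (∀ t, u [] t = a₀ t) ∧
    ∀ x t, ContDiffAt 𝕜 (x.length + 1) a₀ t →
      HasDerivAt (u x) (F (fun i => u (x ++ [i]) t) - u x t) t := by
  obtain rfl : u = fun x => oneAddDerivPow x.length a₀ := funext₂ hu
  refine ⟨fun t => congrFun (oneAddDerivPow_zero a₀) t, fun x t ha => ?_⟩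
  simpa only [List.length_append, List.length_singleton, hF] using hasDerivAt_oneAddDerivPow_sub ha

end OneAddDerivPow

theorem IsAveraging.apply_const_s5 {m : ℕ} {F : (Fin m → ℝ) → ℝ} (hF : IsAveraging m F) (c : ℝ) :
    F (fun _ => c) = c := by
  obtain ⟨-, -, map_one, map_mul, -⟩ := hF
  simpa only [mul_one, map_one] using map_mul c fun _ => 1

/-- for any smooth `a₀`, the function
`u(x,t) = Σ_{j=0}^{l(x)} C(l(x),j) a₀^{(j)}(t)` satisfies `u(∅,t) = a₀(t)` and solves
`∂ₜ u(x,t) = F(u((x,0),t),…,u((x,m−1),t)) − u(x,t)` for `t > 0`. -/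
theorem statement5 (m : ℕ) (hm : 2 ≤ m) (F : (Fin m → ℝ) → ℝ) (hF : IsAveraging m F)
    (a₀ : ℝ → ℝ) (ha : ContDiff ℝ (⊤ : ℕ∞) a₀)
    (u : List (Fin m) → ℝ → ℝ)
    (hu : ∀ (x : List (Fin m)) (t : ℝ),
      u x t = ∑ j ∈ Finset.range (x.length + 1),
        (x.length.choose j : ℝ) * iteratedDeriv j a₀ t) :
    (∀ t : ℝ, u [] t = a₀ t) ∧
    ∀ (x : List (Fin m)), ∀ t > (0:ℝ),
      HasDerivAt (u x) (F (fun i => u (x ++ [i]) t) - u x t) t := by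
  have h := statement5_general F hF.apply_const_s5 a₀ u (by simpa [oneAddDerivPow] using hu)
  exact ⟨h.1, fun x t _ => h.2 x t (ha.contDiffAt.of_le (by exact_mod_cast le_top))⟩
end
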